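/- The Horn, Krom, double Horn, renamable Horn and q-Horn fragments of propositional logic have the uniform interpolation property: for every theory α in the fragment and every set V of atoms, there exists a formula γ in (or expressible in) the same fragment with Var(γ) ⊆ Var(α) \ V such that for every formula β with Var(β) ∩ V = ∅, α ⊨ β if and only if γ ⊨ β. -/

import Mathlib

variable {α : Type*} [Fintype α] [DecidableEq α]

/-- A clause (or term): a finite set of literals, where a literal is an atom
paired with a polarity (`true` = positive occurrence, `false` = negated). -/
abbrev Clause (α : Type*) := Finset (α × Bool)

/-- A finite set of literals is a legal clause/term if it contains no
complementary pair of literals. -/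
def IsClause (c : Clause α) : Prop := ∀ p : α, ¬((p, true) ∈ c ∧ (p, false) ∈ c)

instance : DecidablePred (IsClause (α := α)) := fun c =>
  decidable_of_iff (∀ p : α, ¬((p, true) ∈ c ∧ (p, false) ∈ c)) Iff.rfl

/-- The atoms occurring in a clause/term. -/
def varsC (c : Clause α) : Finset α := c.image Prod.fst

/-- The atoms occurring positively in a clause/term. -/
def posC (c : Clause α) : Finset α := (c.filter fun l => l.2 = true).image Prod.fst

/-- The atoms occurring negatively in a clause/term. -/
def negC (c : Clause α) : Finset α := (c.filter fun l => l.2 = false).image Prod.fst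

/-- The resolvent of two clauses on atom `p`. -/
def res (c c' : Clause α) (p : α) : Clause α :=
  (c ∪ c') \ ({(p, true), (p, false)} : Finset (α × Bool))

/-- `c` and `c'` are resolvable on atom `p`: `p` occurs in one of them and `¬p` in
the other, and the resolvent contains no complementary pair of literals. -/
def ResolvableOn (c c' : Clause α) (p : α) : Prop :=
  ((p, true) ∈ c ∧ (p, false) ∈ c' ∨ (p, false) ∈ c ∧ (p, true) ∈ c') ∧ IsClause (res c c' p)

/-- Renaming of a literal: flip the polarity of atoms in `V`. -/
def renLit (V : Finset α) (l : α × Bool) : α × Bool := if l.1 ∈ V then (l.1, !l.2) else l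

/-- Renaming of a clause w.r.t. the atoms in `V`. -/
def renClause (V : Finset α) (c : Clause α) : Clause α := c.image (renLit V)

/-- Renaming of a CNF theory w.r.t. the atoms in `V`. -/
def renTheory (V : Finset α) (T : Finset (Clause α)) : Finset (Clause α) := T.image (renClause V)

/-- A Horn clause: at most one positive literal. -/
def HornClause (c : Clause α) : Prop := (posC c).card ≤ 1

/-- A Horn theory: a finite set of Horn clauses. -/
def IsHornTheory (T : Finset (Clause α)) : Prop := ∀ c ∈ T, HornClause c

/-- A Krom theory: each clause contains at most 2 literals. -/
def IsKromTheory (T : Finset (Clause α)) : Prop := ∀ c ∈ T, c.card ≤ 2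

/-- `T` is Horn renamable: some renaming of `T` is a Horn theory. -/
def IsRenHorn (T : Finset (Clause α)) : Prop := ∃ V : Finset α, IsHornTheory (renTheory V T)

/-- The QH-conditions for sets of atoms `Q`, `H` and a clause `c`. -/
def QHcond (Q H : Finset α) (c : Clause α) : Prop :=
  (varsC c ∩ Q).card ≤ 2 ∧ (posC c ∩ H).card ≤ 1 ∧
    ((posC c ∩ H).card = 1 → varsC c ∩ Q = ∅)

/-- The atoms occurring in a CNF theory. -/
def varsT (T : Finset (Clause α)) : Finset α := T.sup varsC

/-- `T` has a QH-partition: a partition `{Q, H}` of its atoms satisfying the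
QH-conditions for each of its clauses. -/
def HasQHPartition (T : Finset (Clause α)) : Prop :=
  ∃ Q H : Finset α, Q ∩ H = ∅ ∧ Q ∪ H = varsT T ∧ ∀ c ∈ T, QHcond Q H c

/-- `T` is q-Horn: some renaming of `T` has a QH-partition. -/
def IsQHorn (T : Finset (Clause α)) : Prop := ∃ V : Finset α, HasQHPartition (renTheory V T)

/-- Satisfaction of a literal by an interpretation (a set of atoms). -/
def litSat (I : Set α) (l : α × Bool) : Prop := if l.2 then l.1 ∈ I else l.1 ∉ I

/-- Satisfaction of a clause (read disjunctively). -/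
def clauseSat (I : Set α) (c : Clause α) : Prop := ∃ l ∈ c, litSat I l

/-- Satisfaction of a term (read conjunctively). -/
def termSat (I : Set α) (t : Clause α) : Prop := ∀ l ∈ t, litSat I l

/-- Satisfaction of a CNF theory. -/
def cnfSat (I : Set α) (T : Finset (Clause α)) : Prop := ∀ c ∈ T, clauseSat I c

/-- One step of the resolution closure. -/
def resStep (S : Set (Clause α)) : Set (Clause α) :=
  S ∪ {d | ∃ c ∈ S, ∃ c' ∈ S, ∃ p : α, ResolvableOn c c' p ∧ d = res c c' p}

/-- The iterated resolution closure `res^n_T`. -/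
def resIter (T : Finset (Clause α)) : ℕ → Set (Clause α)
  | 0 => (↑T : Set (Clause α))
  | n + 1 => resStep (resIter T n)

/-- Propositional formulas over atoms `α`. -/
inductive PropForm (α : Type*) where
  | var : α → PropForm α
  | tru : PropForm α
  | fls : PropForm α
  | neg : PropForm α → PropForm α
  | conj : PropForm α → PropForm α → PropForm α
  | disj : PropForm α → PropForm α → PropForm α

namespace PropForm

/-- Satisfaction of a formula by an interpretation. -/
def Sat (I : Set α) : PropForm α → Prop
  | var p => p ∈ I
  | tru => True
  | fls => False
  | neg φ => ¬ Sat I φ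
  | conj φ ψ => Sat I φ ∧ Sat I ψ
  | disj φ ψ => Sat I φ ∨ Sat I ψ

/-- Logical equivalence: same models. -/
def equivalent (φ ψ : PropForm α) : Prop := ∀ I : Set α, Sat I φ ↔ Sat I ψ

/-- Entailment: every model of `φ` is a model of `ψ`. -/
def entails (φ ψ : PropForm α) : Prop := ∀ I : Set α, Sat I φ → Sat I ψ

/-- The atoms occurring in a formula. -/
def vars : PropForm α → Finset α
  | var p => {p}
  | tru => ∅
  | fls => ∅
  | neg φ => vars φ
  | conj φ ψ => vars φ ∪ vars ψ
  | disj φ ψ => vars φ ∪ vars ψ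

/-- Substitution of the formula `χ` for the atom `p`. -/
def subst (p : α) (χ : PropForm α) : PropForm α → PropForm α
  | var q => if q = p then χ else var q
  | tru => tru
  | fls => fls
  | neg φ => neg (subst p χ φ)
  | conj φ ψ => conj (subst p χ φ) (subst p χ ψ)
  | disj φ ψ => disj (subst p χ φ) (subst p χ ψ)

/-- Forgetting a single atom: `Forget(φ, {p}) = φ[p/⊤] ∨ φ[p/⊥]`. -/
def forget1 (φ : PropForm α) (p : α) : PropForm α := disj (subst p tru φ) (subst p fls φ)

/-- Forgetting a set of atoms (presented as a list), one atom at a time: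
`Forget(φ, ∅) = φ` and `Forget(φ, V ∪ {p}) = Forget(Forget(φ, {p}), V)`. -/
def Forget : PropForm α → List α → PropForm α
  | φ, [] => φ
  | φ, p :: V => Forget (forget1 φ p) V

/-- Renaming of a formula: replace each occurrence of an atom `p ∈ V` by `¬p`. -/
def renForm (V : Finset α) : PropForm α → PropForm α
  | var p => if p ∈ V then neg (var p) else var p
  | tru => tru
  | fls => fls
  | neg φ => neg (renForm V φ)
  | conj φ ψ => conj (renForm V φ) (renForm V ψ)
  | disj φ ψ => disj (renForm V φ) (renForm V ψ)

/-- `φ` is irrelevant to the atoms in `V`: it is equivalent to a formula not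
mentioning any atom of `V`. -/
def IR (φ : PropForm α) (V : List α) : Prop :=
  ∃ φ' : PropForm α, equivalent φ φ' ∧ ∀ p ∈ V, p ∉ vars φ'

end PropForm

/-- The formula corresponding to a literal. -/
def litToForm (l : α × Bool) : PropForm α :=
  if l.2 then PropForm.var l.1 else PropForm.neg (PropForm.var l.1)

/-- The disjunction of the literals of a clause. -/
noncomputable def clauseToForm (c : Clause α) : PropForm α :=
  c.toList.foldr (fun l φ => PropForm.disj (litToForm l) φ) PropForm.fls

/-- The conjunction of the clauses of a CNF theory. -/
noncomputable def cnfToForm (T : Finset (Clause α)) : PropForm α :=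
  T.toList.foldr (fun c φ => PropForm.conj (clauseToForm c) φ) PropForm.tru

/-- `φ` is Horn expressible. -/
def HornExpressible (φ : PropForm α) : Prop :=
  ∃ T : Finset (Clause α), (∀ c ∈ T, IsClause c) ∧ IsHornTheory T ∧
    PropForm.equivalent φ (cnfToForm T)

/-- `φ` is Krom expressible. -/
def KromExpressible (φ : PropForm α) : Prop :=
  ∃ T : Finset (Clause α), (∀ c ∈ T, IsClause c) ∧ IsKromTheory T ∧
    PropForm.equivalent φ (cnfToForm T)

/-- `φ` is renamable-Horn expressible. -/
def RenHornExpressible (φ : PropForm α) : Prop :=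
  ∃ T : Finset (Clause α), (∀ c ∈ T, IsClause c) ∧ IsRenHorn T ∧
    PropForm.equivalent φ (cnfToForm T)

/-- `φ` is q-Horn expressible. -/
def QHornExpressible (φ : PropForm α) : Prop :=
  ∃ T : Finset (Clause α), (∀ c ∈ T, IsClause c) ∧ IsQHorn T ∧
    PropForm.equivalent φ (cnfToForm T)

/-- A formula entails a clause. -/
def EntailsClause (φ : PropForm α) (c : Clause α) : Prop :=
  ∀ I : Set α, PropForm.Sat I φ → clauseSat I c

/-- A prime implicate of a formula. -/
def IsPrimeImplicate (φ : PropForm α) (c : Clause α) : Prop :=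
  IsClause c ∧ EntailsClause φ c ∧ ∀ c' ⊂ c, ¬ EntailsClause φ c'

/-- A term entails a formula. -/
def TermEntails (t : Clause α) (φ : PropForm α) : Prop :=
  ∀ I : Set α, termSat I t → PropForm.Sat I φ

/-- A prime implicant of a formula. -/
def IsPrimeImplicant (φ : PropForm α) (t : Clause α) : Prop :=
  IsClause t ∧ TermEntails t φ ∧ ∀ t' ⊂ t, ¬ TermEntails t' φ

/-- A CNF theory entails a clause. -/
def TheoryEntailsClause (T : Finset (Clause α)) (c : Clause α) : Prop :=
  ∀ I : Set α, cnfSat I T → clauseSat I c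

/-- A prime implicate of a CNF theory. -/
def IsPrimeImplicateT (T : Finset (Clause α)) (c : Clause α) : Prop :=
  IsClause c ∧ TheoryEntailsClause T c ∧ ∀ c' ⊂ c, ¬ TheoryEntailsClause T c'

/-- The set of prime implicates of a CNF theory, as a finite theory. -/
noncomputable def PI (T : Finset (Clause α)) : Finset (Clause α) :=
  (Set.toFinite {c : Clause α | IsPrimeImplicateT T c}).toFinset

/-- Strong unfolding of a CNF theory w.r.t. an atom `p`: keep the clauses not
mentioning `p`, and replace the clauses containing the positive literal `p` by all
their resolvents with clauses containing `¬p`; clauses containing `¬p` are removed. -/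
def unfold1 (T : Finset (Clause α)) (p : α) : Finset (Clause α) :=
  T.filter (fun c => (p, true) ∉ c ∧ (p, false) ∉ c) ∪
    ((T ×ˢ T).filter fun cc =>
        (p, true) ∈ cc.1 ∧ (p, false) ∈ cc.2 ∧ IsClause (res cc.1 cc.2 p)).image
      fun cc => res cc.1 cc.2 p

/-- Iterated strong unfolding w.r.t. a set of atoms (presented as a list):
`unfold(T, ∅) = T` and `unfold(T, V ∪ {p}) = unfold(unfold(T, p), V)`. -/
def unfoldList (T : Finset (Clause α)) : List α → Finset (Clause α)
  | [] => T
  | p :: V => unfoldList (unfold1 T p) V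

/-- `φ` is double Horn expressible: both `φ` and `¬φ` are Horn expressible. -/
def DoubleHornExpressible (φ : PropForm α) : Prop :=
  HornExpressible φ ∧ HornExpressible (PropForm.neg φ)

theorem aux_litSat_congr {I J : Set α} {l : α × Bool} (h : l.1 ∈ I ↔ l.1 ∈ J) :
    litSat I l ↔ litSat J l := by
  unfold litSat; split <;> simp [h]

theorem aux_sat_clause (I : Set α) (c : Clause α) :
    PropForm.Sat I (clauseToForm c) ↔ clauseSat I c := by
  have key : ∀ L : List (α × Bool),
      PropForm.Sat I (L.foldr (fun l φ => PropForm.disj (litToForm l) φ) PropForm.fls) ↔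
        ∃ l ∈ L, litSat I l := by
    intro L
    induction L with
    | nil => simp [PropForm.Sat]
    | cons l L ih =>
      have h1 : PropForm.Sat I (litToForm l) ↔ litSat I l := by
        unfold litToForm litSat; split <;> simp [PropForm.Sat]
      simp only [List.foldr_cons, PropForm.Sat, ih, h1, List.mem_cons, exists_eq_or_imp]
  unfold clauseToForm clauseSat
  rw [key]; simp

theorem aux_sat_cnf (I : Set α) (T : Finset (Clause α)) :
    PropForm.Sat I (cnfToForm T) ↔ cnfSat I T := by
  have key : ∀ L : List (Clause α),
      PropForm.Sat I (L.foldr (fun c φ => PropForm.conj (clauseToForm c) φ) PropForm.tru) ↔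
        ∀ c ∈ L, clauseSat I c := by
    intro L
    induction L with
    | nil => simp [PropForm.Sat]
    | cons l L ih =>
      simp only [List.foldr_cons, PropForm.Sat, ih, aux_sat_clause, List.forall_mem_cons]
  unfold cnfToForm cnfSat
  rw [key]; simp

theorem aux_vars_clause (c : Clause α) : PropForm.vars (clauseToForm c) ⊆ varsC c := by
  have key : ∀ L : List (α × Bool), ∀ q,
      q ∈ PropForm.vars (L.foldr (fun l φ => PropForm.disj (litToForm l) φ) PropForm.fls) →
        ∃ l ∈ L, l.1 = q := by
    intro L q
    induction L with
    | nil => simp [PropForm.vars]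
    | cons l L ih =>
      have h1 : PropForm.vars (litToForm l) = {l.1} := by
        unfold litToForm; split <;> simp [PropForm.vars]
      simp only [List.foldr_cons, PropForm.vars, h1, Finset.mem_union, Finset.mem_singleton,
        List.mem_cons, exists_eq_or_imp]
      rintro (h | h)
      · exact Or.inl h.symm
      · exact Or.inr (ih h)
  intro q hq
  obtain ⟨l, hl, h⟩ := key _ q hq
  exact Finset.mem_image.2 ⟨l, by simpa using hl, h⟩

theorem aux_mem_varsT (T : Finset (Clause α)) (q : α) :
    q ∈ varsT T ↔ ∃ c ∈ T, q ∈ varsC c := by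
  unfold varsT; simp [Finset.mem_sup]

theorem aux_vars_cnf (T : Finset (Clause α)) : PropForm.vars (cnfToForm T) ⊆ varsT T := by
  have key : ∀ L : List (Clause α), ∀ q,
      q ∈ PropForm.vars (L.foldr (fun c φ => PropForm.conj (clauseToForm c) φ) PropForm.tru) →
        ∃ c ∈ L, q ∈ varsC c := by
    intro L q
    induction L with
    | nil => simp [PropForm.vars]
    | cons l L ih =>
      simp only [List.foldr_cons, PropForm.vars, Finset.mem_union,
        List.mem_cons, exists_eq_or_imp]
      rintro (h | h)
      · exact Or.inl (aux_vars_clause _ h)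
      · exact Or.inr (ih h)
  intro q hq
  obtain ⟨l, hl, h⟩ := key _ q hq
  exact (aux_mem_varsT _ _).2 ⟨l, by simpa using hl, h⟩

theorem aux_sat_congr {I J : Set α} (β : PropForm α)
    (h : ∀ q ∈ PropForm.vars β, (q ∈ I ↔ q ∈ J)) :
    PropForm.Sat I β ↔ PropForm.Sat J β := by
  induction β with
  | var p => exact h p (by simp [PropForm.vars])
  | tru => simp [PropForm.Sat]
  | fls => simp [PropForm.Sat]
  | neg φ ih => simp only [PropForm.Sat]; rw [ih h]
  | conj φ ψ ih1 ih2 =>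
    simp only [PropForm.Sat]
    rw [ih1 fun q hq => h q (by simp [PropForm.vars, hq]),
      ih2 fun q hq => h q (by simp [PropForm.vars, hq])]
  | disj φ ψ ih1 ih2 =>
    simp only [PropForm.Sat]
    rw [ih1 fun q hq => h q (by simp [PropForm.vars, hq]),
      ih2 fun q hq => h q (by simp [PropForm.vars, hq])]

theorem aux_mem_res (c c' : Clause α) (p : α) (l : α × Bool) :
    l ∈ res c c' p ↔ (l ∈ c ∨ l ∈ c') ∧ l.1 ≠ p := by
  obtain ⟨q, b⟩ := l
  cases b <;> simp [res]

theorem aux_mem_varsC (c : Clause α) (q : α) : q ∈ varsC c ↔ ∃ b, (q, b) ∈ c := by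
  simp [varsC]

theorem aux_mem_posC (c : Clause α) (q : α) : q ∈ posC c ↔ (q, true) ∈ c := by
  simp [posC]

theorem aux_mem_unfold (T : Finset (Clause α)) (p : α) (d : Clause α) :
    d ∈ unfold1 T p ↔ (d ∈ T ∧ (p, true) ∉ d ∧ (p, false) ∉ d) ∨
      ∃ c ∈ T, ∃ c' ∈ T, (p, true) ∈ c ∧ (p, false) ∈ c' ∧ IsClause (res c c' p) ∧
        res c c' p = d := by
  unfold unfold1
  simp only [Finset.mem_union, Finset.mem_filter, Finset.mem_image, Finset.mem_product,
    Prod.exists]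
  constructor
  · rintro (h | ⟨c, c', ⟨⟨h1, h2⟩, h3, h4, h5⟩, h6⟩)
    · exact Or.inl h
    · exact Or.inr ⟨c, h1, c', h2, h3, h4, h5, h6⟩
  · rintro (h | ⟨c, h1, c', h2, h3, h4, h5, h6⟩)
    · exact Or.inl h
    · exact Or.inr ⟨c, c', ⟨⟨h1, h2⟩, h3, h4, h5⟩, h6⟩

theorem aux_taut (I : Set α) (c : Clause α) (h : ¬ IsClause c) : clauseSat I c := by
  unfold IsClause at h
  push Not at h
  obtain ⟨p, h1, h2⟩ := h
  by_cases hp : p ∈ I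
  · exact ⟨_, h1, by simpa [litSat] using hp⟩
  · exact ⟨_, h2, by simpa [litSat] using hp⟩

theorem aux_unfold_sem (T : Finset (Clause α)) (hT : ∀ c ∈ T, IsClause c) (p : α) (I : Set α) :
    cnfSat I (unfold1 T p) ↔ ∃ J : Set α, (∀ q, q ≠ p → (q ∈ J ↔ q ∈ I)) ∧ cnfSat J T := by
  constructor
  · intro h
    by_contra hno
    push Not at hno
    have h1 := hno (insert p I) (by intro q hq; simp [hq])
    have h0 := hno (I \ {p}) (by intro q hq; simp [hq])
    unfold cnfSat at h1 h0
    push Not at h1 h0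
    obtain ⟨c', hc', h1⟩ := h1
    obtain ⟨c, hc, h0⟩ := h0
    have n1 : (p, true) ∉ c' := fun hh => h1 ⟨_, hh, by simp [litSat]⟩
    have n0 : (p, false) ∉ c := fun hh => h0 ⟨_, hh, by simp [litSat]⟩
    have tr1 : ∀ l ∈ c', l.1 ≠ p → ¬ litSat I l := fun l hl hlp hs =>
      h1 ⟨l, hl, (aux_litSat_congr (by simp [hlp])).1 hs⟩
    have tr0 : ∀ l ∈ c, l.1 ≠ p → ¬ litSat I l := fun l hl hlp hs =>
      h0 ⟨l, hl, (aux_litSat_congr (by simp [hlp])).1 hs⟩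
    have m1 : (p, false) ∈ c' := by
      by_contra hh
      obtain ⟨l, hl, hs⟩ := h c' ((aux_mem_unfold _ _ _).2 (Or.inl ⟨hc', n1, hh⟩))
      refine tr1 l hl ?_ hs
      rintro rfl
      obtain ⟨q, b⟩ := l
      cases b
      · exact hh hl
      · exact n1 hl
    have m0 : (p, true) ∈ c := by
      by_contra hh
      obtain ⟨l, hl, hs⟩ := h c ((aux_mem_unfold _ _ _).2 (Or.inl ⟨hc, hh, n0⟩))
      refine tr0 l hl ?_ hs
      rintro rfl
      obtain ⟨q, b⟩ := l
      cases b
      · exact n0 hl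
      · exact hh hl
    have hr : clauseSat I (res c c' p) := by
      by_cases hcl : IsClause (res c c' p)
      · exact h _ ((aux_mem_unfold _ _ _).2 (Or.inr ⟨c, hc, c', hc', m0, m1, hcl, rfl⟩))
      · exact aux_taut _ _ hcl
    obtain ⟨l, hl, hs⟩ := hr
    rw [aux_mem_res] at hl
    rcases hl with ⟨hl | hl, hp⟩
    · exact tr0 l hl hp hs
    · exact tr1 l hl hp hs
  · rintro ⟨J, hJ, hs⟩ d hd
    rcases (aux_mem_unfold _ _ _).1 hd with ⟨hd, h1, h2⟩ | ⟨c, hc, c', hc', h1, h2, -, rfl⟩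
    · obtain ⟨l, hl, hls⟩ := hs d hd
      refine ⟨l, hl, (aux_litSat_congr (hJ l.1 ?_)).1 hls⟩
      rintro rfl
      obtain ⟨q, b⟩ := l
      cases b
      · exact h2 hl
      · exact h1 hl
    · by_cases hp : p ∈ J
      · obtain ⟨l, hl, hls⟩ := hs c' hc'
        have hlp : l.1 ≠ p := by
          rintro rfl
          obtain ⟨q, b⟩ := l
          cases b
          · simp [litSat] at hls; exact hls hp
          · exact hT c' hc' q ⟨hl, h2⟩
        exact ⟨l, (aux_mem_res _ _ _ _).2 ⟨Or.inr hl, hlp⟩, (aux_litSat_congr (hJ l.1 hlp)).1 hls⟩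
      · obtain ⟨l, hl, hls⟩ := hs c hc
        have hlp : l.1 ≠ p := by
          rintro rfl
          obtain ⟨q, b⟩ := l
          cases b
          · exact hT c hc q ⟨h1, hl⟩
          · simp [litSat] at hls; exact hp hls
        exact ⟨l, (aux_mem_res _ _ _ _).2 ⟨Or.inl hl, hlp⟩, (aux_litSat_congr (hJ l.1 hlp)).1 hls⟩

theorem aux_elim (P : Clause α → Prop)
    (hP : ∀ c c' p, P c → P c' → (p, true) ∈ c → (p, false) ∈ c' → P (res c c' p))
    (L : List α) : ∀ T : Finset (Clause α), (∀ c ∈ T, IsClause c) → (∀ c ∈ T, P c) →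
    ∃ T' : Finset (Clause α), (∀ c ∈ T', IsClause c) ∧ (∀ c ∈ T', P c) ∧
      (∀ q ∈ varsT T', q ∈ varsT T ∧ q ∉ L) ∧
      ∀ I : Set α, cnfSat I T' ↔ ∃ J : Set α, (∀ q, q ∉ L → (q ∈ J ↔ q ∈ I)) ∧ cnfSat J T := by
  induction L with
  | nil =>
    intro T h1 h2
    refine ⟨T, h1, h2, by simp, fun I => ⟨fun h => ⟨I, by simp, h⟩, ?_⟩⟩
    rintro ⟨J, hJ, h⟩
    have : J = I := Set.ext fun q => hJ q (by simp)
    exact this ▸ h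
  | cons p L ih =>
    intro T h1 h2
    obtain ⟨T', a1, a2, a3, a4⟩ := ih (unfold1 T p) (by
        intro c hc
        rcases (aux_mem_unfold _ _ _).1 hc with h | ⟨_, _, _, _, _, _, h, rfl⟩
        · exact h1 c h.1
        · exact h) (by
        intro c hc
        rcases (aux_mem_unfold _ _ _).1 hc with h | ⟨e, he, e', he', m, m', h, rfl⟩
        · exact h2 c h.1
        · exact hP _ _ _ (h2 _ he) (h2 _ he') m m')
    refine ⟨T', a1, a2, ?_, ?_⟩
    · intro q hq
      obtain ⟨b1, b2⟩ := a3 q hq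
      obtain ⟨d, hd, hqd⟩ := (aux_mem_varsT _ _).1 b1
      obtain ⟨b, hb⟩ := (aux_mem_varsC _ _).1 hqd
      have key : q ∈ varsT T ∧ q ≠ p := by
        rcases (aux_mem_unfold _ _ _).1 hd with h | ⟨c, hc, c', hc', m, m', h, rfl⟩
        · refine ⟨(aux_mem_varsT _ _).2 ⟨d, h.1, hqd⟩, ?_⟩
          rintro rfl
          cases b
          · exact h.2.2 hb
          · exact h.2.1 hb
        · obtain ⟨hb | hb, hne⟩ := (aux_mem_res _ _ _ _).1 hb
          · exact ⟨(aux_mem_varsT _ _).2 ⟨c, hc, (aux_mem_varsC _ _).2 ⟨b, hb⟩⟩, hne⟩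
          · exact ⟨(aux_mem_varsT _ _).2 ⟨c', hc', (aux_mem_varsC _ _).2 ⟨b, hb⟩⟩, hne⟩
      exact ⟨key.1, by simp [key.2, b2]⟩
    · intro I
      rw [a4]
      constructor
      · rintro ⟨J, hJ, hs⟩
        obtain ⟨K, hK, hs⟩ := (aux_unfold_sem T h1 p J).1 hs
        refine ⟨K, fun q hq => ?_, hs⟩
        simp only [List.mem_cons, not_or] at hq
        rw [hK q hq.1, hJ q hq.2]
      · rintro ⟨K, hK, hs⟩
        refine ⟨{q | (q ∈ L ∧ q ∈ K) ∨ (q ∉ L ∧ q ∈ I)}, ?_, ?_⟩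
        · intro q hq; simp [hq]
        · refine (aux_unfold_sem T h1 p _).2 ⟨K, ?_, hs⟩
          intro q hq
          by_cases hL : q ∈ L
          · simp [hL]
          · simp [hL, hK q (by simp [hq, hL])]

theorem aux_main (P : Clause α → Prop)
    (hP : ∀ c c' p, P c → P c' → (p, true) ∈ c → (p, false) ∈ c' → P (res c c' p))
    (T : Finset (Clause α)) (h1 : ∀ c ∈ T, IsClause c) (h2 : ∀ c ∈ T, P c) (V : Finset α) :
    ∃ T' : Finset (Clause α), (∀ c ∈ T', IsClause c) ∧ (∀ c ∈ T', P c) ∧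
      PropForm.vars (cnfToForm T') ⊆ varsT T \ V ∧
      (∀ β : PropForm α, PropForm.vars β ∩ V = ∅ →
          (PropForm.entails (cnfToForm T) β ↔ PropForm.entails (cnfToForm T') β)) ∧
      ∀ I : Set α, cnfSat I T' ↔ ∃ J : Set α, (∀ q, q ∉ V → (q ∈ J ↔ q ∈ I)) ∧ cnfSat J T := by
  obtain ⟨T', a1, a2, a3, a4⟩ := aux_elim P hP V.toList T h1 h2
  simp only [Finset.mem_toList] at a3 a4
  refine ⟨T', a1, a2, ?_, ?_, a4⟩
  · intro q hq
    have := a3 q (aux_vars_cnf _ hq)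
    simpa using this
  · intro β hβ
    have hβ' : ∀ q ∈ PropForm.vars β, q ∉ V := by
      intro q hq hqV
      have : q ∈ PropForm.vars β ∩ V := Finset.mem_inter.2 ⟨hq, hqV⟩
      rw [hβ] at this
      simp at this
    unfold PropForm.entails
    simp only [aux_sat_cnf]
    constructor
    · intro h I hI
      obtain ⟨J, hJ, hs⟩ := (a4 I).1 hI
      exact (aux_sat_congr β fun q hq => hJ q (hβ' q hq)).1 (h J hs)
    · intro h I hI
      exact h I ((a4 I).2 ⟨I, fun _ _ => Iff.rfl, hI⟩)

theorem aux_horn_res (c c' : Clause α) (p : α) (h : HornClause c) (h' : HornClause c')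
    (hm : (p, true) ∈ c) : HornClause (res c c' p) := by
  refine le_trans (Finset.card_le_card ?_) h'
  intro q hq
  rw [aux_mem_posC, aux_mem_res] at hq
  rw [aux_mem_posC]
  obtain ⟨hq | hq, hne⟩ := hq
  · exact absurd (Finset.card_le_one.1 h q ((aux_mem_posC _ _).2 hq) p ((aux_mem_posC _ _).2 hm)) hne
  · exact hq

theorem aux_krom_res (c c' : Clause α) (p : α) (h : c.card ≤ 2) (h' : c'.card ≤ 2)
    (hm : (p, true) ∈ c) (hm' : (p, false) ∈ c') : (res c c' p).card ≤ 2 := by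
  have hs : res c c' p ⊆ c.erase (p, true) ∪ c'.erase (p, false) := by
    intro l hl
    obtain ⟨hl, hne⟩ := (aux_mem_res _ _ _ _).1 hl
    simp only [Finset.mem_union, Finset.mem_erase]
    rcases hl with hl | hl
    · exact Or.inl ⟨by rintro rfl; exact hne rfl, hl⟩
    · exact Or.inr ⟨by rintro rfl; exact hne rfl, hl⟩
  have := Finset.card_le_card hs
  have h3 := Finset.card_union_le (c.erase (p, true)) (c'.erase (p, false))
  rw [Finset.card_erase_of_mem hm, Finset.card_erase_of_mem hm'] at h3
  omega

theorem aux_qh_res (Q H : Finset α) (c c' : Clause α) (p : α) (h : QHcond Q H c)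
    (h' : QHcond Q H c') (hm : (p, true) ∈ c) (hm' : (p, false) ∈ c') (hp : p ∈ Q ∨ p ∈ H) :
    QHcond Q H (res c c' p) := by
  obtain ⟨h1, h2, h3⟩ := h
  obtain ⟨h1', h2', h3'⟩ := h'
  have pc : p ∈ posC c := (aux_mem_posC _ _).2 hm
  have vc : p ∈ varsC c := (aux_mem_varsC _ _).2 ⟨_, hm⟩
  have vc' : p ∈ varsC c' := (aux_mem_varsC _ _).2 ⟨_, hm'⟩
  have vres : ∀ q ∈ varsC (res c c' p), (q ∈ varsC c ∨ q ∈ varsC c') ∧ q ≠ p := by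
    intro q hq
    obtain ⟨b, hb⟩ := (aux_mem_varsC _ _).1 hq
    obtain ⟨hb | hb, hne⟩ := (aux_mem_res _ _ _ _).1 hb
    · exact ⟨Or.inl ((aux_mem_varsC _ _).2 ⟨b, hb⟩), hne⟩
    · exact ⟨Or.inr ((aux_mem_varsC _ _).2 ⟨b, hb⟩), hne⟩
  have pres : ∀ q ∈ posC (res c c' p), (q ∈ posC c ∨ q ∈ posC c') ∧ q ≠ p := by
    intro q hq
    simpa only [aux_mem_posC, aux_mem_res] using hq
  by_cases hH : p ∈ H
  · have pcH : p ∈ posC c ∩ H := Finset.mem_inter.2 ⟨pc, hH⟩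
    have e : varsC c ∩ Q = ∅ := h3 (le_antisymm h2 (Finset.card_pos.2 ⟨p, pcH⟩))
    have s1 : varsC (res c c' p) ∩ Q ⊆ varsC c' ∩ Q := by
      intro q hq
      obtain ⟨hq, hQ⟩ := Finset.mem_inter.1 hq
      rcases (vres q hq).1 with hh | hh
      · have : q ∈ varsC c ∩ Q := Finset.mem_inter.2 ⟨hh, hQ⟩
        rw [e] at this
        simp at this
      · exact Finset.mem_inter.2 ⟨hh, hQ⟩
    have s2 : posC (res c c' p) ∩ H ⊆ posC c' ∩ H := by
      intro q hq
      obtain ⟨hq, hQ⟩ := Finset.mem_inter.1 hq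
      obtain ⟨hh | hh, hne⟩ := pres q hq
      · exact absurd (Finset.card_le_one.1 h2 q (Finset.mem_inter.2 ⟨hh, hQ⟩) p pcH) hne
      · exact Finset.mem_inter.2 ⟨hh, hQ⟩
    have k1 := Finset.card_le_card s1
    have k2 := Finset.card_le_card s2
    refine ⟨k1.trans h1', k2.trans h2', fun hc => ?_⟩
    have := h3' (by omega)
    rw [this] at s1
    exact Finset.subset_empty.1 s1
  · have hQ : p ∈ Q := hp.resolve_right hH
    have pv : p ∈ varsC c ∩ Q := Finset.mem_inter.2 ⟨vc, hQ⟩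
    have pv' : p ∈ varsC c' ∩ Q := Finset.mem_inter.2 ⟨vc', hQ⟩
    have z : (posC c ∩ H).card = 0 := by
      by_contra hz
      have := h3 (by omega)
      rw [this] at pv; simp at pv
    have z' : (posC c' ∩ H).card = 0 := by
      by_contra hz
      have := h3' (by omega)
      rw [this] at pv'; simp at pv'
    have zr : posC (res c c' p) ∩ H = ∅ := by
      rw [Finset.card_eq_zero] at z z'
      apply Finset.eq_empty_of_forall_notMem
      intro q hq
      obtain ⟨hq, hqH⟩ := Finset.mem_inter.1 hq
      rcases (pres q hq).1 with hh | hh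
      · have := Finset.mem_inter.2 ⟨hh, hqH⟩
        rw [z] at this; simp at this
      · have := Finset.mem_inter.2 ⟨hh, hqH⟩
        rw [z'] at this; simp at this
    have s : varsC (res c c' p) ∩ Q ⊆ (varsC c ∩ Q).erase p ∪ (varsC c' ∩ Q).erase p := by
      intro q hq
      obtain ⟨hq, hqQ⟩ := Finset.mem_inter.1 hq
      obtain ⟨hh, hne⟩ := vres q hq
      simp only [Finset.mem_union, Finset.mem_erase, Finset.mem_inter]
      tauto
    have k := Finset.card_le_card s
    have k2 := Finset.card_union_le ((varsC c ∩ Q).erase p) ((varsC c' ∩ Q).erase p)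
    rw [Finset.card_erase_of_mem pv, Finset.card_erase_of_mem pv'] at k2
    refine ⟨by omega, by simp [zr], by simp [zr]⟩

theorem aux_mem_ren (V : Finset α) (c : Clause α) (q : α) (b : Bool) :
    (q, b) ∈ renClause V c ↔ (q, if q ∈ V then !b else b) ∈ c := by
  unfold renClause renLit
  simp only [Finset.mem_image, Prod.exists]
  constructor
  · rintro ⟨r, d, hm, he⟩
    split_ifs at he with hr
    · obtain ⟨rfl, rfl⟩ := Prod.mk.inj he
      simpa [hr] using hm
    · obtain ⟨rfl, rfl⟩ := Prod.mk.inj he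
      simpa [hr] using hm
  · intro h
    refine ⟨_, _, h, ?_⟩
    by_cases hq : q ∈ V <;> simp [hq]

theorem aux_ren_res (V : Finset α) (c c' : Clause α) (p : α) :
    renClause V (res c c' p) = res (renClause V c) (renClause V c') p := by
  ext ⟨q, b⟩
  simp only [aux_mem_ren, aux_mem_res]

theorem aux_res_comm (c c' : Clause α) (p : α) : res c c' p = res c' c p := by
  unfold res; rw [Finset.union_comm]

/-- closure under resolution transfers along renaming -/
theorem aux_ren_closed (P : Clause α → Prop)
    (hP : ∀ c c' p, P c → P c' → (p, true) ∈ c → (p, false) ∈ c' → P (res c c' p))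
    (V : Finset α) (c c' : Clause α) (p : α) (h : P (renClause V c)) (h' : P (renClause V c'))
    (m : (p, true) ∈ c) (m' : (p, false) ∈ c') : P (renClause V (res c c' p)) := by
  rw [aux_ren_res]
  by_cases hp : p ∈ V
  · rw [aux_res_comm]
    exact hP _ _ _ h' h (by simpa [aux_mem_ren, hp] using m') (by simpa [aux_mem_ren, hp] using m)
  · exact hP _ _ _ h h' (by simpa [aux_mem_ren, hp] using m) (by simpa [aux_mem_ren, hp] using m')

theorem aux_renTheory_forall (V : Finset α) (T : Finset (Clause α)) (P : Clause α → Prop) :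
    (∀ c ∈ renTheory V T, P c) ↔ ∀ c ∈ T, P (renClause V c) := by
  simp [renTheory]

theorem aux_double (T : Finset (Clause α)) (hn : HornExpressible (PropForm.neg (cnfToForm T)))
    (V : Finset α) (T' : Finset (Clause α))
    (h : ∀ I : Set α, cnfSat I T' ↔ ∃ J : Set α, (∀ q, q ∉ V → (q ∈ J ↔ q ∈ I)) ∧ cnfSat J T) :
    HornExpressible (PropForm.neg (cnfToForm T')) := by
  obtain ⟨S, s1, s2, s3⟩ := hn
  refine ⟨S.image fun c => c.filter fun l => l.1 ∉ V, ?_, ?_, ?_⟩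
  · intro c hc
    obtain ⟨d, hd, rfl⟩ := Finset.mem_image.1 hc
    intro p hp
    exact s1 d hd p ⟨(Finset.mem_filter.1 hp.1).1, (Finset.mem_filter.1 hp.2).1⟩
  · intro c hc
    obtain ⟨d, hd, rfl⟩ := Finset.mem_image.1 hc
    refine le_trans (Finset.card_le_card ?_) (s2 d hd)
    intro q hq
    rw [aux_mem_posC] at hq ⊢
    exact (Finset.mem_filter.1 hq).1
  · intro I
    have s3' : ∀ J : Set α, ¬ cnfSat J T ↔ cnfSat J S := by
      intro J
      have := s3 J
      simpa only [PropForm.Sat, aux_sat_cnf] using this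
    simp only [PropForm.Sat, aux_sat_cnf]
    rw [h]
    constructor
    · intro hno c hc
      obtain ⟨d, hd, rfl⟩ := Finset.mem_image.1 hc
      have hJ : cnfSat {q | (q ∈ V ∧ (q, false) ∈ d) ∨ (q ∉ V ∧ q ∈ I)} S := by
        rw [← s3']
        intro hs
        exact hno ⟨_, fun q hq => by simp [hq], hs⟩
      obtain ⟨l, hl, hls⟩ := hJ d hd
      have hlV : l.1 ∉ V := by
        intro hV
        obtain ⟨q, b⟩ := l
        cases b
        · simp [litSat] at hls
          exact (hls.1 hV) hl
        · simp [litSat] at hls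
          rcases hls with hls | hls
          · exact s1 d hd q ⟨hl, hls.2⟩
          · exact hls.1 hV
      exact ⟨l, Finset.mem_filter.2 ⟨hl, hlV⟩, (aux_litSat_congr (by simp [hlV])).1 hls⟩
    · rintro hs ⟨J, hJ, hJT⟩
      refine (s3' J).2 ?_ hJT
      intro d hd
      obtain ⟨l, hl, hls⟩ := hs _ (Finset.mem_image_of_mem _ hd)
      obtain ⟨hl, hV⟩ := Finset.mem_filter.1 hl
      exact ⟨l, hl, (aux_litSat_congr (hJ _ hV)).2 hls⟩

theorem aux_self_equiv (φ : PropForm α) : PropForm.equivalent φ φ := fun _ => Iff.rfl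

/-- The Horn, Krom, double Horn, renamable Horn and q-Horn fragments
have the uniform interpolation property: for every theory `α` in the fragment and
every set `V` of atoms, there is a formula `γ` expressible in the same fragment
with `Var(γ) ⊆ Var(α) \ V` such that for every formula `β` with `Var(β) ∩ V = ∅`,
`α ⊨ β` iff `γ ⊨ β`. -/
theorem uniform_interpolation_fragments :
    (∀ T : Finset (Clause α), (∀ c ∈ T, IsClause c) → IsHornTheory T →
      ∀ V : Finset α, ∃ γ : PropForm α, HornExpressible γ ∧
        PropForm.vars γ ⊆ varsT T \ V ∧
        ∀ β : PropForm α, PropForm.vars β ∩ V = ∅ →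
          (PropForm.entails (cnfToForm T) β ↔ PropForm.entails γ β)) ∧
    (∀ T : Finset (Clause α), (∀ c ∈ T, IsClause c) → IsKromTheory T →
      ∀ V : Finset α, ∃ γ : PropForm α, KromExpressible γ ∧
        PropForm.vars γ ⊆ varsT T \ V ∧
        ∀ β : PropForm α, PropForm.vars β ∩ V = ∅ →
          (PropForm.entails (cnfToForm T) β ↔ PropForm.entails γ β)) ∧
    (∀ T : Finset (Clause α), (∀ c ∈ T, IsClause c) → IsHornTheory T →
      HornExpressible (PropForm.neg (cnfToForm T)) →
      ∀ V : Finset α, ∃ γ : PropForm α, DoubleHornExpressible γ ∧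
        PropForm.vars γ ⊆ varsT T \ V ∧
        ∀ β : PropForm α, PropForm.vars β ∩ V = ∅ →
          (PropForm.entails (cnfToForm T) β ↔ PropForm.entails γ β)) ∧
    (∀ T : Finset (Clause α), (∀ c ∈ T, IsClause c) → IsRenHorn T →
      ∀ V : Finset α, ∃ γ : PropForm α, RenHornExpressible γ ∧
        PropForm.vars γ ⊆ varsT T \ V ∧
        ∀ β : PropForm α, PropForm.vars β ∩ V = ∅ →
          (PropForm.entails (cnfToForm T) β ↔ PropForm.entails γ β)) ∧
    (∀ T : Finset (Clause α), (∀ c ∈ T, IsClause c) → IsQHorn T →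
      ∀ V : Finset α, ∃ γ : PropForm α, QHornExpressible γ ∧
        PropForm.vars γ ⊆ varsT T \ V ∧
        ∀ β : PropForm α, PropForm.vars β ∩ V = ∅ →
          (PropForm.entails (cnfToForm T) β ↔ PropForm.entails γ β)) := by
  refine ⟨?_, ?_, ?_, ?_, ?_⟩
  · intro T hT hH V
    obtain ⟨T', a1, a2, a3, a4, -⟩ := aux_main HornClause
      (fun c c' p h h' m _ => aux_horn_res c c' p h h' m) T hT hH V
    exact ⟨cnfToForm T', ⟨T', a1, a2, aux_self_equiv _⟩, a3, a4⟩
  · intro T hT hH V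
    obtain ⟨T', a1, a2, a3, a4, -⟩ := aux_main (fun c => c.card ≤ 2)
      (fun c c' p h h' m m' => aux_krom_res c c' p h h' m m') T hT hH V
    exact ⟨cnfToForm T', ⟨T', a1, a2, aux_self_equiv _⟩, a3, a4⟩
  · intro T hT hH hN V
    obtain ⟨T', a1, a2, a3, a4, a5⟩ := aux_main HornClause
      (fun c c' p h h' m _ => aux_horn_res c c' p h h' m) T hT hH V
    exact ⟨cnfToForm T', ⟨⟨T', a1, a2, aux_self_equiv _⟩, aux_double T hN V T' a5⟩, a3, a4⟩
  · rintro T hT ⟨W, hW⟩ V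
    obtain ⟨T', a1, a2, a3, a4, -⟩ := aux_main (fun c => HornClause (renClause W c))
      (fun c c' p h h' m m' => aux_ren_closed HornClause
        (fun c c' p h h' m _ => aux_horn_res c c' p h h' m) W c c' p h h' m m') T hT
      ((aux_renTheory_forall W T HornClause).1 hW) V
    exact ⟨cnfToForm T', ⟨T', a1, ⟨W, (aux_renTheory_forall W T' HornClause).2 a2⟩,
      aux_self_equiv _⟩, a3, a4⟩
  · rintro T hT ⟨W, Q, H, hd, hu, hW⟩ V
    let P : Clause α → Prop := fun c => QHcond Q H c ∧ varsC c ⊆ Q ∪ H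
    have hP : ∀ c c' p, P c → P c' → (p, true) ∈ c → (p, false) ∈ c' → P (res c c' p) := by
      rintro c c' p ⟨h, hs⟩ ⟨h', hs'⟩ m m'
      refine ⟨aux_qh_res Q H c c' p h h' m m'
        (Finset.mem_union.1 (hs ((aux_mem_varsC _ _).2 ⟨_, m⟩))), ?_⟩
      intro q hq
      obtain ⟨b, hb⟩ := (aux_mem_varsC _ _).1 hq
      obtain ⟨hb | hb, -⟩ := (aux_mem_res _ _ _ _).1 hb
      · exact hs ((aux_mem_varsC _ _).2 ⟨b, hb⟩)
      · exact hs' ((aux_mem_varsC _ _).2 ⟨b, hb⟩)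
    have hTP : ∀ c ∈ renTheory W T, P c := fun c hc =>
      ⟨hW c hc, fun q hq => hu ▸ (aux_mem_varsT _ _).2 ⟨c, hc, hq⟩⟩
    obtain ⟨T', a1, a2, a3, a4, -⟩ := aux_main (fun c => P (renClause W c))
      (fun c c' p h h' m m' => aux_ren_closed P hP W c c' p h h' m m') T hT
      ((aux_renTheory_forall W T P).1 hTP) V
    have a2' := (aux_renTheory_forall W T' P).2 a2
    refine ⟨cnfToForm T', ⟨T', a1, ⟨W, Q ∩ varsT (renTheory W T'), H ∩ varsT (renTheory W T'),
      ?_, ?_, ?_⟩, aux_self_equiv _⟩, a3, a4⟩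
    · apply Finset.eq_empty_of_forall_notMem
      intro q hq
      simp only [Finset.mem_inter] at hq
      have : q ∈ Q ∩ H := Finset.mem_inter.2 ⟨hq.1.1, hq.2.1⟩
      rw [hd] at this
      simp at this
    · rw [← Finset.union_inter_distrib_right]
      apply Finset.inter_eq_right.2
      intro q hq
      obtain ⟨c, hc, hq⟩ := (aux_mem_varsT _ _).1 hq
      exact (a2' c hc).2 hq
    · intro c hc
      have hv : varsC c ⊆ varsT (renTheory W T') := fun q hq => (aux_mem_varsT _ _).2 ⟨c, hc, hq⟩
      have hp : posC c ⊆ varsT (renTheory W T') := fun q hq =>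
        hv ((aux_mem_varsC _ _).2 ⟨true, (aux_mem_posC _ _).1 hq⟩)
      have e1 : varsC c ∩ (Q ∩ varsT (renTheory W T')) = varsC c ∩ Q := by
        ext q; simp only [Finset.mem_inter]
        exact ⟨fun h => ⟨h.1, h.2.1⟩, fun h => ⟨h.1, h.2, hv h.1⟩⟩
      have e2 : posC c ∩ (H ∩ varsT (renTheory W T')) = posC c ∩ H := by
        ext q; simp only [Finset.mem_inter]
        exact ⟨fun h => ⟨h.1, h.2.1⟩, fun h => ⟨h.1, h.2, hp h.1⟩⟩
      unfold QHcond
      rw [e1, e2]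
      exact (a2' c hc).1
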